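/- For every infinitary self-delimiting machine M, the measure of any Σ^0_3 subset of the domain of the associated prefix-free machine M^* is not a 3-random real number. In particular, the probability that the output of a universal infinitary self-delimiting machine is a stream with a tail of 1s is not 3-random. -/

import Mathlib

open scoped Classical
open MeasureTheory

namespace RandProb

/-- Cantor space: the space of infinite binary sequences. -/
abbrev Cantor := ℕ → Bool

/-! ### Oracle partial recursive functions, via codes -/

/-- Codes for partial recursive functions with access to an oracle `O : ℕ → ℕ`.
These codes play the role of (oracle) Turing machines. -/
inductive CodeO : Type
  | zero : CodeO
  | succ : CodeO
  | left : CodeO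
  | right : CodeO
  | oracle : CodeO
  | pair : CodeO → CodeO → CodeO
  | comp : CodeO → CodeO → CodeO
  | prec : CodeO → CodeO → CodeO
  | rfind' : CodeO → CodeO

/-- Evaluation of an oracle code with (total) oracle `O`. -/
def CodeO.eval (O : ℕ → ℕ) : CodeO → ℕ →. ℕ
  | .zero => pure 0
  | .succ => Nat.succ
  | .left => ↑fun n : ℕ => n.unpair.1
  | .right => ↑fun n : ℕ => n.unpair.2
  | .oracle => ↑fun n : ℕ => O n
  | .pair cf cg => fun n => Nat.pair <$> cf.eval O n <*> cg.eval O n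
  | .comp cf cg => fun n => cg.eval O n >>= cf.eval O
  | .prec cf cg =>
    Nat.unpaired fun a n =>
      n.rec (cf.eval O a) fun y IH => do
        let i ← IH
        cg.eval O (Nat.pair a (Nat.pair y i))
  | .rfind' cf =>
    Nat.unpaired fun a m =>
      (Nat.rfind fun n => (fun m => m = 0) <$> cf.eval O (Nat.pair a (n + m))).map (· + m)

/-- A canonical injective numbering of oracle codes. -/
def CodeO.encode : CodeO → ℕ
  | .zero => 0
  | .succ => 1
  | .left => 2
  | .right => 3
  | .oracle => 4
  | .pair cf cg => 2 * (2 * Nat.pair cf.encode cg.encode) + 5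
  | .comp cf cg => 2 * (2 * Nat.pair cf.encode cg.encode + 1) + 5
  | .prec cf cg => 2 * (2 * Nat.pair cf.encode cg.encode) + 6
  | .rfind' cf => 2 * (2 * cf.encode + 1) + 6

/-- The Turing jump of an oracle: the halting problem relative to `O`,
as a `{0,1}`-valued function. -/
noncomputable def jump (O : ℕ → ℕ) : ℕ → ℕ := fun e =>
  if ∃ c : CodeO, c.encode = e ∧ (c.eval O e).Dom then 1 else 0

/-- `iterJump n` is `∅^(n)`, the `n`-th iterate of the halting problem (as an oracle). -/
noncomputable def iterJump : ℕ → ℕ → ℕ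
  | 0 => fun _ => 0
  | n + 1 => jump (iterJump n)

/-- `S ⊆ ℕ` is computably enumerable relative to the oracle `O`. -/
def CeIn (O : ℕ → ℕ) (S : Set ℕ) : Prop := ∃ c : CodeO, S = {m | (c.eval O m).Dom}

/-- The left Dedekind cut of `α` (as a set of codes of rationals) is c.e. in `O`. -/
def LeftCeIn (O : ℕ → ℕ) (α : ℝ) : Prop :=
  CeIn O {m | ∃ q : ℚ, Encodable.encode q = m ∧ (q : ℝ) < α}

/-- The right Dedekind cut of `α` (as a set of codes of rationals) is c.e. in `O`. -/
def RightCeIn (O : ℕ → ℕ) (α : ℝ) : Prop :=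
  CeIn O {m | ∃ q : ℚ, Encodable.encode q = m ∧ α < (q : ℝ)}

/-! ### Martin-Löf randomness for real numbers -/

/-- The `i`-th component of a Martin-Löf test coded by the set `W ⊆ ℕ`:
the union of all open rational intervals whose codes are enumerated into the
`i`-th section of `W`. -/
def testSet (W : Set ℕ) (i : ℕ) : Set ℝ :=
  {x | ∃ p q : ℚ, Nat.pair i (Encodable.encode (p, q)) ∈ W ∧ (p : ℝ) < x ∧ x < (q : ℝ)}

/-- `α` is Martin-Löf random relative to the oracle `O`. -/
def MLRandomIn (O : ℕ → ℕ) (α : ℝ) : Prop :=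
  ∀ W : Set ℕ, CeIn O W →
    (∀ i, volume (testSet W i) ≤ ENNReal.ofReal ((2 : ℝ)⁻¹ ^ i)) →
    ∃ i, α ∉ testSet W i

/-- `α` is `n`-random: Martin-Löf random relative to `∅^(n-1)`. -/
def NRandom (n : ℕ) (α : ℝ) : Prop := MLRandomIn (iterJump (n - 1)) α

/-! ### The uniform measure on Cantor space -/

/-- The binary digits of a real number (meaningful on `[0,1)`). -/
noncomputable def digits (x : ℝ) : Cantor := fun n => decide (⌊x * 2 ^ (n + 1)⌋ % 2 = 1)

/-- The uniform (Lebesgue) product measure on Cantor space, obtained as the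
pushforward of Lebesgue measure on `[0,1)` under the binary-digit map. -/
noncomputable def mu : Measure Cantor :=
  Measure.map digits (volume.restrict (Set.Ico (0 : ℝ) 1))

/-- The uniform measure of a set of elements of Cantor space, as a real number. -/
noncomputable def muR (S : Set Cantor) : ℝ := (mu S).toReal

/-! ### Strings, prefixes and cylinders -/

/-- The length-`n` initial segment of `X ∈ 2^ω`, as a finite binary string. -/
def initSeg (X : Cantor) (n : ℕ) : List Bool := (List.range n).map X

/-- `⟦S⟧`: the elements of Cantor space having a prefix in the set of strings `S`. -/
def cyl (S : Set (List Bool)) : Set Cantor := {X | ∃ n, initSeg X n ∈ S}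

/-- A set of strings is prefix-free if none of its elements properly extends another. -/
def IsPrefixFree (S : Set (List Bool)) : Prop := ∀ σ ∈ S, ∀ τ ∈ S, σ <+: τ → σ = τ

/-- A set of strings is upward closed if it is closed under taking extensions. -/
def UpClosed (S : Set (List Bool)) : Prop := ∀ σ ∈ S, ∀ τ, σ <+: τ → τ ∈ S

/-- Two strings are compatible if one is a prefix of the other. -/
def Compatible (σ τ : List Bool) : Prop := σ <+: τ ∨ τ <+: σ

/-! ### Oracle machines -/

/-- An element of Cantor space viewed as a `{0,1}`-valued oracle. -/
def oX (X : Cantor) : ℕ → ℕ := fun n => cond (X n) 1 0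

/-- `evalO X c n`: the (possibly divergent) output of the oracle machine `c`
on input `n` with oracle `X`. -/
def evalO (X : Cantor) (c : CodeO) (n : ℕ) : Part ℕ := c.eval (oX X) n

/-- The oracle obtained by writing the string `ρ` before the bits of `X`. -/
def prepend (ρ : List Bool) (X : Cantor) : Cantor := fun n =>
  if n < ρ.length then ρ.getD n false else X (n - ρ.length)

/-- `X ∈ 2^ω` extends the finite string `ρ`. -/
def Extends (X : Cantor) (ρ : List Bool) : Prop := initSeg X ρ.length = ρ

/-- `u` is a universal oracle machine: some effective, prefix-free translation
`c ↦ σ_c` satisfies `u(σ_c * X, n) ≃ c(X, n)` for all machines `c`. -/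
def UniversalOM (u : CodeO) : Prop :=
  ∃ σ : CodeO → List Bool,
    (∃ f : ℕ → ℕ, Computable f ∧ ∀ c : CodeO, f c.encode = Encodable.encode (σ c)) ∧
    IsPrefixFree (Set.range σ) ∧
    ∀ (c : CodeO) (X : Cantor) (n : ℕ), evalO (prepend (σ c) X) u n = evalO X c n

/-- `TOT(c)`: the oracles `X` such that the function `c(X)` is total. -/
def TOT (c : CodeO) : Set Cantor := {X | ∀ n, (evalO X c n).Dom}

/-- The domain of the partial function `c(X)`. -/
def domSet (c : CodeO) (X : Cantor) : Set ℕ := {n | (evalO X c n).Dom}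

/-- The range of the partial function `c(X)`. -/
def ranSet (c : CodeO) (X : Cantor) : Set ℕ := {v | ∃ n, v ∈ evalO X c n}

/-- `INF(c)`: the oracles `X` such that `c(X)` has infinite domain. -/
def INF (c : CodeO) : Set Cantor := {X | (domSet c X).Infinite}

/-- `COF(c)`: the oracles `X` such that `c(X)` has cofinite domain. -/
def COF (c : CodeO) : Set Cantor := {X | (domSet c X)ᶜ.Finite}

/-- `COM(c)`: the oracles `X` such that `c(X)` has computable domain. -/
def COM (c : CodeO) : Set Cantor := {X | ComputablePred fun n => n ∈ domSet c X}

/-- The characteristic function of a set of naturals. -/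
noncomputable def chi (A : Set ℕ) : ℕ → ℕ := fun n => if n ∈ A then 1 else 0

/-- Turing reducibility between sets of naturals. -/
def TuringLEs (B A : Set ℕ) : Prop := ∃ c : CodeO, ∀ n, c.eval (chi A) n = Part.some (chi B n)

/-- The halting problem `∅'` as a set of naturals. -/
noncomputable def HaltingSet : Set ℕ := {e | iterJump 1 e = 1}

/-- `COMPL(c)`: the oracles `X` such that the domain of `c(X)` computes the halting problem. -/
noncomputable def COMPL (c : CodeO) : Set Cantor := {X | TuringLEs HaltingSet (domSet c X)}

/-- Turing reducibility between total functions on ℕ. -/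
def TuringLEf (f g : ℕ → ℕ) : Prop := ∃ c : CodeO, ∀ n, c.eval g n = Part.some (f n)

/-- A real number viewed as an oracle, via its binary expansion. -/
noncomputable def realOracle (α : ℝ) : ℕ → ℕ := oX (digits α)

/-- Two reals have Turing-incomparable degrees. -/
noncomputable def TIncompReal (α β : ℝ) : Prop :=
  ¬ TuringLEf (realOracle α) (realOracle β) ∧ ¬ TuringLEf (realOracle β) (realOracle α)

/-! ### Arithmetical hierarchy -/

/-- Evaluation with the trivial (empty) oracle: ordinary partial recursion. -/
def eval0 (c : CodeO) : ℕ →. ℕ := c.eval fun _ => 0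

/-- `SigmaNumIdx n c` is the `Σ^0_{n+1}` subset of `ℕ` with index `c`. -/
def SigmaNumIdx : ℕ → CodeO → Set ℕ
  | 0, c => {m | (eval0 c m).Dom}
  | n + 1, c => {m | ∃ k, Nat.pair m k ∉ SigmaNumIdx n c}

/-- `S ⊆ ℕ` is `Σ^0_n` (intended for `n ≥ 1`). -/
def SigmaN (n : ℕ) (S : Set ℕ) : Prop := ∃ c : CodeO, S = SigmaNumIdx (n - 1) c

/-- The set of codes of the elements of a set of binary strings. -/
def strCodes (S : Set (List Bool)) : Set ℕ := {m | ∃ σ ∈ S, Encodable.encode σ = m}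

/-- A set of binary strings is `Σ^0_n`. -/
def SigmaStr (n : ℕ) (S : Set (List Bool)) : Prop := SigmaN n (strCodes S)

/-- A set of binary strings is `Π^0_n`: its complement is `Σ^0_n`. -/
def PiStr (n : ℕ) (S : Set (List Bool)) : Prop := SigmaStr n Sᶜ

/-- A set of binary strings is c.e. relative to the oracle `O`. -/
def CeStrIn (O : ℕ → ℕ) (S : Set (List Bool)) : Prop := CeIn O (strCodes S)

/-- `SigmaClassIdx n c m` is the `Σ^0_{n+1}` class of elements of Cantor space
with index `c` and parameter `m`. -/
def SigmaClassIdx : ℕ → CodeO → ℕ → Set Cantor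
  | 0, c, m => {X | (evalO X c m).Dom}
  | n + 1, c, m => {X | ∃ k, X ∉ SigmaClassIdx n c (Nat.pair m k)}

/-! ### Monotone machines -/

/-- A monotone machine: a partial computable, monotone map on finite binary strings. -/
structure MonoMachine where
  f : List Bool →. List Bool
  partrec : Partrec f
  mono : ∀ ⦃σ τ a b : List Bool⦄, σ <+: τ → a ∈ f σ → b ∈ f τ → a <+: b

/-- The oracles `X` such that the output of the monotone machine on `X` is infinite. -/
def MonoINF (M : MonoMachine) : Set Cantor :=
  {X | ∀ k, ∃ n a, a ∈ M.f (initSeg X n) ∧ k ≤ a.length}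

/-- The `k`-th bit of the output `M(X)` of a monotone machine is `b`. -/
def MonoMachine.hasBit (M : MonoMachine) (X : Cantor) (k : ℕ) (b : Bool) : Prop :=
  ∃ n a, a ∈ M.f (initSeg X n) ∧ a[k]? = some b

/-- `U` is a universal monotone machine. -/
def UniversalMono (U : MonoMachine) : Prop :=
  ∃ (M : ℕ → MonoMachine) (σ : ℕ → List Bool),
    Partrec₂ (fun (e : ℕ) (τ : List Bool) => (M e).f τ) ∧
    (∀ V : MonoMachine, ∃ e, (M e).f = V.f) ∧
    Computable σ ∧ IsPrefixFree (Set.range σ) ∧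
    ∀ e τ, U.f (σ e ++ τ) = (M e).f τ

/-! ### Infinitary self-delimiting machines -/

/-- Chaitin's infinitary self-delimiting machines: `f σ n` is the `n`-th approximation
of the output on program `σ` (`none` meaning divergence); the convergence relation is
decidable, approximations are monotone, and machines are self-delimiting. -/
structure InfMachine where
  f : List Bool → ℕ → Option (List Bool)
  computable : Computable₂ f
  mono : ∀ σ m n a, n < m → f σ m = some a → ∃ b, f σ n = some b ∧ b <+: a
  sd : ∀ σ τ n a, f σ n = some a → f (σ ++ τ) n = some a

/-- `M^∞(σ)↓`: all approximations converge. -/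
def InfMachine.domInf (M : InfMachine) (σ : List Bool) : Prop := ∀ n, M.f σ n ≠ none

/-- The domain of `M^∞`. -/
def InfMachine.DOM (M : InfMachine) : Set (List Bool) := {σ | M.domInf σ}

/-- The output `M^∞(σ)` is infinite (a stream). -/
def InfMachine.outInf (M : InfMachine) (σ : List Bool) : Prop :=
  ∀ k, ∃ n a, M.f σ n = some a ∧ k ≤ a.length

/-- `FIN(M^∞)`: programs in the domain with finite output. -/
def InfMachine.FIN (M : InfMachine) : Set (List Bool) := {σ | M.domInf σ ∧ ¬ M.outInf σ}

/-- `INF(M^∞)`: programs in the domain with infinite output. -/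
def InfMachine.INF (M : InfMachine) : Set (List Bool) := {σ | M.domInf σ ∧ M.outInf σ}

/-- The `k`-th bit of the output `M^∞(σ)` is `b`. -/
def InfMachine.hasBit (M : InfMachine) (σ : List Bool) (k : ℕ) (b : Bool) : Prop :=
  ∃ n a, M.f σ n = some a ∧ a[k]? = some b

/-- The domain of the prefix-free machine `M^*`: minimal strings in the domain of `M^∞`. -/
def InfMachine.DOMstar (M : InfMachine) : Set (List Bool) :=
  {σ | M.domInf σ ∧ ∀ τ, τ <+: σ → τ ≠ σ → ¬ M.domInf τ}

/-- Programs whose output is a stream with a tail of 1s. -/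
def InfMachine.COFout (M : InfMachine) : Set (List Bool) :=
  {σ | M.domInf σ ∧ M.outInf σ ∧ ∃ t, ∀ k, t ≤ k → M.hasBit σ k true}

/-- `A^∞(σ) ≃ B^∞(τ)`: both converge or both diverge, with equal outputs. -/
def InfAgree (A : InfMachine) (σ : List Bool) (B : InfMachine) (τ : List Bool) : Prop :=
  (A.domInf σ ↔ B.domInf τ) ∧ (A.domInf σ → ∀ k b, (A.hasBit σ k b ↔ B.hasBit τ k b))

/-- `U` is a universal infinitary self-delimiting machine. -/
def UniversalInf (U : InfMachine) : Prop :=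
  ∃ (M : ℕ → InfMachine) (σ : ℕ → List Bool),
    Computable (fun p : ℕ × List Bool × ℕ => (M p.1).f p.2.1 p.2.2) ∧
    (∀ V : InfMachine, ∃ e, ∀ τ, InfAgree (M e) τ V τ) ∧
    Computable σ ∧ IsPrefixFree (Set.range σ) ∧
    ∀ e τ, InfAgree U (σ e ++ τ) (M e) τ

end RandProb

namespace RandProb

/-!
The elements of the prefix-free `Δ⁰₂` domain `D` of `M^*` are the indices of a convergent series of
weights `2⁻¹ ^ |σ|`. Fix a `∅'`-computable increasing approximation `T` of `D` with `T g` of size at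
most `g`, and call a stage `g` *good* if the total weight of `T` grows by at most `2⁻¹ ^ (i + 1)`
after it; with oracle `∅''` one can recognise the good stages. Let `V` be a `∅''`-computable
increasing approximation of a `Σ⁰₃` set `S ⊆ D`, so that the partial sums over `V` increase to the
measure of `S`. For a good `g`, everything outside `T g` that ever enters `V` has total weight at
most `2⁻¹ ^ (i + 1)`; hence the balls of radius `2⁻¹ ^ (i + g + 2)` around all partial sums cover at
most this weight, plus one full ball for the initial sum and one for each element of `T g` that
enters `V`: at most `2⁻¹ ^ i` altogether. The balls of a larger good stage lie inside those of the
least one, so all good stages may be used at once. Letting `i` vary gives a Martin-Löf test relative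
to `∅''` which the measure of `S` fails.
-/

/-! ### Oracle computation -/

namespace CodeO

/-- The ordinary code `c`, viewed as an oracle code that never consults its oracle. -/
def ofCode : Nat.Partrec.Code → CodeO
  | .zero => .zero
  | .succ => .succ
  | .left => .left
  | .right => .right
  | .pair c d => .pair (ofCode c) (ofCode d)
  | .comp c d => .comp (ofCode c) (ofCode d)
  | .prec c d => .prec (ofCode c) (ofCode d)
  | .rfind' c => .rfind' (ofCode c)

theorem eval_ofCode (O : ℕ → ℕ) (c : Nat.Partrec.Code) : (ofCode c).eval O = c.eval := by
  induction c with
  | pair _ _ ihc ihd | comp _ _ ihc ihd | prec _ _ ihc ihd =>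
    simp only [ofCode, eval, Nat.Partrec.Code.eval, ihc, ihd]
    rfl
  | rfind' _ ih =>
    simp only [ofCode, eval, Nat.Partrec.Code.eval, ih]
    congr!
  | _ => rfl

theorem exists_eval_eq {f : ℕ →. ℕ} (hf : Nat.Partrec f) : ∃ c : CodeO, ∀ O, c.eval O = f := by
  obtain ⟨c, rfl⟩ := Nat.Partrec.Code.exists_code.1 hf
  exact ⟨ofCode c, fun O => eval_ofCode O c⟩

theorem partrec_eval0 (c : CodeO) : Nat.Partrec (eval0 c) := by
  unfold eval0
  induction c with
  | zero => exact .zero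
  | succ => exact .succ
  | left => exact .left
  | right => exact .right
  | oracle => exact .zero
  | pair _ _ ihc ihd => exact .pair ihc ihd
  | comp _ _ ihc ihd => exact .comp ihc ihd
  | prec _ _ ihc ihd => exact .prec ihc ihd
  | rfind' _ ih => exact Nat.Partrec.rfind' ih

theorem encode_injective : Function.Injective encode := by
  intro c
  induction c with
  | pair c d ihc ihd | comp c d ihc ihd | prec c d ihc ihd =>
    rintro (_ | _ | _ | _ | _ | ⟨c', d'⟩ | ⟨c', d'⟩ | ⟨c', d'⟩ | _) h <;>
      simp only [encode] at h <;> try omega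
    obtain ⟨hc, hd⟩ := Nat.pair_eq_pair.1
      (by omega : Nat.pair c.encode d.encode = Nat.pair c'.encode d'.encode)
    rw [ihc hc, ihd hd]
  | rfind' c ih =>
    rintro (_ | _ | _ | _ | _ | _ | _ | _ | c') h <;> simp only [encode] at h <;> try omega
    rw [ih (by omega : c.encode = c'.encode)]
  | _ => rintro ⟨⟩ h <;> simp [encode] at h ⊢

theorem eval_comp_of_eval_eq_some {O : ℕ → ℕ} {d : CodeO} {m x : ℕ}
    (h : d.eval O m = Part.some x) (c : CodeO) : (comp c d).eval O m = c.eval O x := by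
  simp only [eval, h]
  exact Part.bind_some x (c.eval O)

/-- The code of the constant function with value `n`. -/
def const : ℕ → CodeO
  | 0 => .zero
  | n + 1 => .comp .succ (const n)

theorem eval_const (O : ℕ → ℕ) (n m : ℕ) : (const n).eval O m = Part.some n := by
  induction n with
  | zero => rfl
  | succ n ih => exact eval_comp_of_eval_eq_some ih _

theorem primrec₂_encode_comp : Primrec₂ fun a b : ℕ => 2 * (2 * Nat.pair a b + 1) + 5 :=
  Primrec.nat_add.comp (Primrec.nat_mul.comp (.const 2) (Primrec.succ.comp
    (Primrec.nat_mul.comp (.const 2) Primrec₂.natPair))) (.const 5)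

theorem primrec_encode_const : Primrec fun n => (const n).encode := by
  refine (Primrec.nat_rec₁ 0
    (primrec₂_encode_comp.comp (.const succ.encode) .snd).to₂).of_eq fun n => ?_
  induction n with
  | zero => rfl
  | succ n ih => simp only [const, encode, ← ih]

end CodeO

section DecidableIn

variable {α : Type*} [Primcodable α] {O : ℕ → ℕ}

/-- The predicate `p` is decidable relative to the oracle `O`, through the codes of its
arguments. -/
def DecidableIn (O : ℕ → ℕ) (p : α → Prop) : Prop :=
  ∃ c : CodeO, ∀ a, c.eval O (Encodable.encode a) = Part.some (if p a then 1 else 0)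

/-- The predicate `p` is semidecidable relative to the oracle `O`: its extension is the domain of
an oracle machine. -/
def SemidecidableIn (O : ℕ → ℕ) (p : α → Prop) : Prop :=
  ∃ c : CodeO, ∀ a, (c.eval O (Encodable.encode a)).Dom ↔ p a

theorem DecidableIn.of_computable {p : α → Prop} (hp : ComputablePred p) : DecidableIn O p := by
  obtain ⟨c, hc⟩ := CodeO.exists_eval_eq hp.decide
  refine ⟨c, fun a => ?_⟩
  by_cases h : p a <;> simp [hc, h]

theorem DecidableIn.semidecidableIn_exists_not {q : α × ℕ → Prop} (hq : DecidableIn O q) :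
    SemidecidableIn O fun a => ∃ k, ¬ q (a, k) := by
  obtain ⟨c, hc⟩ := hq
  obtain ⟨d, hd⟩ := CodeO.exists_eval_eq (Partrec.nat_iff.1
    (Primrec₂.natPair.comp Primrec.id (Primrec.const 0)).to_comp)
  have search (a : α) : ((CodeO.rfind' c).comp d).eval O (Encodable.encode a) =
      Nat.rfind fun k => Part.some (decide (¬ q (a, k))) := by
    rw [CodeO.eval_comp_of_eval_eq_some (congrFun (hd O) _)]
    simp only [CodeO.eval, Nat.unpaired, id, Nat.unpair_pair, Nat.add_zero]
    rw [Part.map_id' fun _ => rfl]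
    congr 1
    funext k
    rw [show c.eval O (Nat.pair (Encodable.encode a) k) = _ from hc (a, k)]
    by_cases h : q (a, k) <;> simp [h]
  refine ⟨.comp (.rfind' c) d, fun a => ?_⟩
  rw [search]
  refine Nat.rfind_dom.trans ⟨fun ⟨k, hk, _⟩ => ⟨k, by simpa using hk⟩, fun ⟨k, hk⟩ => ⟨k, ?_, ?_⟩⟩
  · simpa using hk
  · exact fun _ => trivial

theorem SemidecidableIn.decidableIn_jump {p : α → Prop} (hp : SemidecidableIn O p) :
    DecidableIn (jump O) p := by
  obtain ⟨c, hc⟩ := hp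
  obtain ⟨d, hd⟩ := CodeO.exists_eval_eq (Partrec.nat_iff.1
    (CodeO.primrec₂_encode_comp.comp (.const c.encode) CodeO.primrec_encode_const).to_comp)
  refine ⟨.comp .oracle d, fun a => ?_⟩
  rw [CodeO.eval_comp_of_eval_eq_some (congrFun (hd _) _)]
  change Part.some (jump O (CodeO.comp c (CodeO.const (Encodable.encode a))).encode) = _
  simp only [jump, CodeO.encode_injective.eq_iff, exists_eq_left,
    CodeO.eval_comp_of_eval_eq_some (CodeO.eval_const O _ _), hc]

end DecidableIn

/-! ### The arithmetical hierarchy -/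

theorem computablePred_forall_lt {α : Type*} [Primcodable α] {p : α × ℕ → Prop}
    (hp : ComputablePred p) : ComputablePred fun x : α × ℕ => ∀ m < x.2, p (x.1, m) := by
  have h : Computable fun x : α × ℕ =>
      Nat.rec (motive := fun _ => Bool) true (fun m b => b && decide (p (x.1, m))) x.2 :=
    .nat_rec (h := fun x y => y.2 && decide (p (x.1, y.1))) .snd (.const true)
      (Primrec.and.to_comp.comp (.comp .snd .snd)
        (hp.decide.comp (.pair (.comp .fst .fst) (.comp .fst .snd))))
  refine Computable.computablePred (h.of_eq fun ⟨a, t⟩ => ?_)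
  induction t with
  | zero => simp
  | succ t ih =>
    simp only at ih
    simp only [ih, Nat.forall_lt_succ_right, Bool.decide_and]

theorem forall_lt_exists_iff {r : ℕ → ℕ → Prop} {t : ℕ} :
    (∀ m < t, ∃ k, r m k) ↔ ∃ K, ∀ m < t, ∃ k < K, r m k := by
  refine ⟨fun h => ?_, fun ⟨K, hK⟩ m hm => (hK m hm).imp fun k hk => hk.2⟩
  have bounded : ∀ᶠ K in Filter.atTop, ∀ m ∈ Finset.range t, ∃ k < K, r m k := by
    refine (Finset.eventually_all _).2 fun m hm => ?_
    obtain ⟨k, hk⟩ := h m (Finset.mem_range.1 hm)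
    filter_upwards [Filter.eventually_gt_atTop k] with K hK using ⟨k, hK, hk⟩
  simpa using bounded.exists

/-- The predicate `p` is `Σ⁰ₙ`. Level `0` consists of the computable predicates, and a `Σ⁰ₙ₊₁`
predicate is obtained from a `Σ⁰ₙ` one by negation followed by an existential quantifier. -/
def IsSigma : ℕ → ∀ {α : Type*} [Primcodable α], (α → Prop) → Prop
  | 0, _, _, p => ComputablePred p
  | n + 1, α, _, p => ∃ q : α × ℕ → Prop, IsSigma n q ∧ ∀ a, p a ↔ ∃ k, ¬ q (a, k)

namespace IsSigma

variable {α β : Type*} [Primcodable α] [Primcodable β] {n : ℕ}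

theorem decidableIn {p : α → Prop} (hp : IsSigma n p) : DecidableIn (iterJump n) p := by
  induction n generalizing α with
  | zero => exact .of_computable hp
  | succ n ih =>
    obtain ⟨q, hq, hpq⟩ := hp
    rw [show p = _ from funext fun a => propext (hpq a)]
    exact (ih hq).semidecidableIn_exists_not.decidableIn_jump

theorem ceIn {p : ℕ → Prop} (hp : IsSigma (n + 1) p) : CeIn (iterJump n) {m | p m} := by
  obtain ⟨q, hq, hpq⟩ := hp
  obtain ⟨c, hc⟩ := hq.decidableIn.semidecidableIn_exists_not
  exact ⟨c, Set.ext fun m => (hpq m).trans (hc m).symm⟩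

theorem of_iff {p q : α → Prop} (hq : IsSigma n q) (h : ∀ a, p a ↔ q a) : IsSigma n p := by
  rwa [show p = q from funext fun a => propext (h a)]

theorem comp {p : α → Prop} (hp : IsSigma n p) {f : β → α} (hf : Computable f) :
    IsSigma n fun b => p (f b) := by
  induction n generalizing α β with
  | zero => exact Computable.computablePred (hp.decide.comp hf)
  | succ n ih =>
    obtain ⟨q, hq, hpq⟩ := hp
    exact ⟨fun x => q (f x.1, x.2), ih hq ((hf.comp .fst).pair .snd), fun b => hpq (f b)⟩

theorem of_computable {p : α → Prop} (hp : ComputablePred p) : IsSigma n p := by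
  induction n generalizing α with
  | zero => exact hp
  | succ n ih =>
    exact ⟨fun x => ¬ p x.1, ih (comp (n := 0) hp.not .fst), fun a => by simp⟩

theorem succ {p : α → Prop} (hp : IsSigma n p) : IsSigma (n + 1) p := by
  induction n generalizing α with
  | zero => exact of_computable hp
  | succ n ih =>
    obtain ⟨q, hq, hpq⟩ := hp
    exact ⟨q, ih hq, hpq⟩

theorem mono {p : α → Prop} {m : ℕ} (hp : IsSigma m p) (h : m ≤ n) : IsSigma n p :=
  Nat.le_induction hp (fun _ _ => succ) n h

theorem exists_not {q : α × β → Prop} (hq : IsSigma n q) :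
    IsSigma (n + 1) fun a => ∃ b, ¬ q (a, b) := by
  rcases isEmpty_or_nonempty β with _ | ⟨⟨b₀⟩⟩
  · exact of_computable (Computable.computablePred
      ((Computable.const false).of_eq fun a => by simp))
  · refine ⟨fun x => q (x.1, (Encodable.decode x.2).getD b₀), hq.comp (.pair .fst ?_), fun a => ?_⟩
    · exact Primrec.option_getD.to_comp.comp (Computable.decode.comp .snd) (Computable.const b₀)
    · exact ⟨fun ⟨b, hb⟩ => ⟨Encodable.encode b, by simpa using hb⟩, fun ⟨k, hk⟩ => ⟨_, hk⟩⟩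

theorem not {p : α → Prop} (hp : IsSigma n p) : IsSigma (n + 1) fun a => ¬ p a :=
  ⟨fun x => p x.1, hp.comp .fst, fun a => by simp⟩

theorem exists_of {p : α × β → Prop} (hp : IsSigma (n + 1) p) :
    IsSigma (n + 1) fun a => ∃ b, p (a, b) := by
  obtain ⟨q, hq, hpq⟩ := hp
  have hq' : IsSigma n fun x : α × β × ℕ => q ((x.1, x.2.1), x.2.2) :=
    hq.comp ((Computable.fst.pair (.comp .fst .snd)).pair (.comp .snd .snd))
  refine hq'.exists_not.of_iff fun a => ?_
  simp only [Prod.exists]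
  exact exists_congr fun b => hpq (a, b)

theorem and_or {p q : α → Prop} (hp : IsSigma n p) (hq : IsSigma n q) :
    IsSigma n (fun a => p a ∧ q a) ∧ IsSigma n (fun a => p a ∨ q a) := by
  induction n generalizing α with
  | zero =>
    exact ⟨Computable.computablePred ((Primrec.and.to_comp.comp hp.decide hq.decide).of_eq
        fun a => by simp),
      Computable.computablePred ((Primrec.or.to_comp.comp hp.decide hq.decide).of_eq
        fun a => by simp)⟩
  | succ n ih =>
    obtain ⟨p', hp', hpp'⟩ := hp
    obtain ⟨q', hq', hqq'⟩ := hq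
    constructor
    · have hpq : IsSigma n fun x : α × ℕ × ℕ => p' (x.1, x.2.1) ∨ q' (x.1, x.2.2) :=
        (ih (hp'.comp (Computable.fst.pair (.comp .fst .snd)))
          (hq'.comp (Computable.fst.pair (.comp .snd .snd)))).2
      refine hpq.exists_not.of_iff fun a => ?_
      simp only [hpp', hqq', not_or, Prod.exists, exists_and_left, exists_and_right]
    · exact ⟨_, (ih hp' hq').1, fun a => by simp only [hpp', hqq', not_and_or, exists_or]⟩

theorem and {p q : α → Prop} (hp : IsSigma n p) (hq : IsSigma n q) :
    IsSigma n fun a => p a ∧ q a :=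
  (and_or hp hq).1

theorem or {p q : α → Prop} (hp : IsSigma n p) (hq : IsSigma n q) :
    IsSigma n fun a => p a ∨ q a :=
  (and_or hp hq).2

theorem forall_exists_lt {p : α × ℕ → Prop} (hp : IsSigma n p) :
    IsSigma n (fun x : α × ℕ => ∀ m < x.2, p (x.1, m)) ∧
      IsSigma n (fun x : α × ℕ => ∃ m < x.2, p (x.1, m)) := by
  induction n generalizing α with
  | zero =>
    refine ⟨computablePred_forall_lt hp,
      (computablePred_forall_lt (ComputablePred.not hp)).not.of_eq fun x => ?_⟩
    simp only [not_forall, not_not, exists_prop]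
  | succ n ih =>
    constructor
    · obtain ⟨q, hq, hpq⟩ := hp
      have inner : IsSigma n fun x : (α × ℕ) × ℕ => ∀ k < x.1.2, q ((x.1.1, x.2), k) :=
        (ih hq).1.comp (.pair (.pair (.comp .fst .fst) .snd) (.comp .snd .fst))
      have outer : IsSigma n fun x : (α × ℕ) × ℕ => ∃ m < x.1.2, ∀ k < x.2, q ((x.1.1, m), k) :=
        (ih inner).2.comp (.pair (.pair (.comp .fst .fst) .snd) (.comp .snd .fst))
      refine ⟨_, outer, fun x => ?_⟩
      beta_reduce
      rw [forall₂_congr fun m _ => hpq (x.1, m), forall_lt_exists_iff]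
      simp only [not_exists, not_and, not_forall, exists_prop]
    · have bounded : IsSigma (n + 1) fun x : (α × ℕ) × ℕ => x.2 < x.1.2 ∧ p (x.1.1, x.2) :=
        (of_computable (Primrec.nat_lt.comp .snd (.comp .snd .fst)).computablePred).and
          (hp.comp (.pair (.comp .fst .fst) .snd))
      exact bounded.exists_of

theorem forall_lt {p : α × ℕ → Prop} (hp : IsSigma n p) {t : α → ℕ} (ht : Computable t) :
    IsSigma n fun a => ∀ m < t a, p (a, m) :=
  (forall_exists_lt hp).1.comp (Computable.id.pair ht)

theorem exists_lt {p : α × ℕ → Prop} (hp : IsSigma n p) {t : α → ℕ} (ht : Computable t) :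
    IsSigma n fun a => ∃ m < t a, p (a, m) :=
  (forall_exists_lt hp).2.comp (Computable.id.pair ht)

end IsSigma

open Nat.Partrec (Code) in
theorem isSigma_sigmaNumIdx (n : ℕ) (c : CodeO) :
    IsSigma (n + 1) fun m : ℕ => m ∈ SigmaNumIdx n c := by
  induction n with
  | zero =>
    obtain ⟨d, hd⟩ := Code.exists_code.1 (CodeO.partrec_eval0 c)
    have halts : ComputablePred fun x : ℕ × ℕ => (Code.evaln x.2 d x.1).isSome = true :=
      (Primrec.option_isSome.comp
        (Code.primrec_evaln.comp (.pair (.pair .snd (.const d)) .fst))).to_comp.of_eq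
        (fun x => Bool.decide_eq_true.symm) |>.computablePred
    refine ⟨_, IsSigma.of_computable halts.not, fun m => ?_⟩
    simp only [SigmaNumIdx, ← hd, Set.mem_ofPred_eq, not_not, Part.dom_iff_mem, Code.evaln_complete,
      Option.isSome_iff_exists, Option.mem_def]
    exact exists_comm
  | succ n ih => exact ih.comp (Primrec₂.natPair.comp .fst .snd).to_comp |>.exists_not

/-- The function `f` has a `Σ⁰ₙ` graph. -/
def IsSigmaFun (n : ℕ) {α β : Type*} [Primcodable α] [Primcodable β] (f : α → β) : Prop :=
  IsSigma n fun x : α × β => f x.1 = x.2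

theorem computable₂_sum_range {α : Type*} [Primcodable α] {f : α → ℕ → ℕ} (hf : Computable₂ f) :
    Computable₂ fun a t => ∑ m ∈ Finset.range t, f a m := by
  have h : Computable fun x : α × ℕ =>
      Nat.rec (motive := fun _ => ℕ) 0 (fun m s => s + f x.1 m) x.2 :=
    .nat_rec (h := fun x y => y.2 + f x.1 y.1) .snd (.const 0)
      (Primrec.nat_add.to_comp.comp (.comp .snd .snd)
        (hf.comp (.comp .fst .fst) (.comp .fst .snd)))
  refine h.of_eq fun ⟨a, t⟩ => ?_
  induction t with
  | zero => rfl
  | succ t ih => exact (congrArg (· + f a t) ih).trans (Finset.sum_range_succ _ _).symm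

section IsSigmaFun

variable {α β : Type*} [Primcodable α] [Primcodable β] {n : ℕ}

theorem IsSigmaFun.comp {γ : Type*} [Primcodable γ] {f : α → β} (hf : IsSigmaFun n f) {g : γ → α}
    (hg : Computable g) : IsSigmaFun n fun c => f (g c) :=
  IsSigma.comp hf ((hg.comp .fst).pair .snd)

theorem IsSigma.comp_isSigmaFun {p : α × β → Prop} {f : α → β} (hp : IsSigma (n + 1) p)
    (hf : IsSigmaFun (n + 1) f) : IsSigma (n + 1) fun a => p (a, f a) :=
  (IsSigma.and hf hp).exists_of.of_iff fun a => by simp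

theorem IsSigmaFun.ite {p : α → Prop} (hp : IsSigma n p) (hnp : IsSigma n fun a => ¬ p a)
    {f g : α → ℕ} (hf : Computable f) (hg : Computable g) :
    IsSigmaFun n fun a => if p a then f a else g a := by
  have graph {h : α → ℕ} (hh : Computable h) : IsSigma n fun x : α × ℕ => h x.1 = x.2 :=
    (IsSigma.of_computable (n := n) Primrec.eq.computablePred).comp ((hh.comp .fst).pair .snd)
  refine (((hp.comp .fst).and (graph hf)).or ((hnp.comp .fst).and (graph hg))).of_iff fun x => ?_
  by_cases h : p x.1 <;> simp [h]

theorem IsSigmaFun.sum_range {f : α × ℕ → ℕ} (hf : IsSigmaFun (n + 1) f) {t : α → ℕ}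
    (ht : Computable t) : IsSigmaFun (n + 1) fun a => ∑ m ∈ Finset.range (t a), f (a, m) := by
  have entry : Computable₂ fun (l : List ℕ) (m : ℕ) => l.getD m 0 := (Primrec.list_getD 0).to_comp
  have entries : IsSigma (n + 1) fun x : (α × ℕ) × List ℕ =>
      ∀ m < t x.1.1, f (x.1.1, m) = x.2.getD m 0 :=
    (IsSigma.comp hf (.pair (.pair (.comp .fst (.comp .fst .fst)) .snd)
      (entry.comp (.comp .snd .fst) .snd))).forall_lt (ht.comp (.comp .fst .fst))
  have total : IsSigma (n + 1) fun x : (α × ℕ) × List ℕ =>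
      ∑ m ∈ Finset.range (t x.1.1), x.2.getD m 0 = x.1.2 :=
    (IsSigma.of_computable Primrec.eq.computablePred).comp
      (.pair ((computable₂_sum_range entry).comp .snd (ht.comp (.comp .fst .fst)))
        (.comp .snd .fst))
  refine (entries.and total).exists_of.of_iff fun ⟨a, s⟩ => ⟨fun hs => ?_, fun ⟨l, hl, hs⟩ => ?_⟩
  · have values (m) (hm : m < t a) :
        ((List.range (t a)).map fun m => f (a, m)).getD m 0 = f (a, m) := by
      simp [hm]
    refine ⟨(List.range (t a)).map fun m => f (a, m), fun m hm => (values m hm).symm, ?_⟩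
    exact (Finset.sum_congr rfl fun m hm => values m (Finset.mem_range.1 hm)).trans hs
  · exact (Finset.sum_congr rfl fun m hm => hl m (Finset.mem_range.1 hm)).trans hs

end IsSigmaFun

/-! ### Martin-Löf tests from families of dyadic balls -/

section RationalCodes

/-- The positive part of the integer with code `m`. In Mathlib's coding, `n ≥ 0` has code `2 * n`
and `-(n + 1)` has code `2 * n + 1`. -/
def codedPos (m : ℕ) : ℕ := if m % 2 = 0 then m / 2 else 0

/-- The negative part of the integer with code `m`. -/
def codedNeg (m : ℕ) : ℕ := if m % 2 = 0 then 0 else m / 2 + 1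

theorem codedPos_sub_codedNeg (z : ℤ) :
    (codedPos (Encodable.encode z) : ℤ) - codedNeg (Encodable.encode z) = z := by
  rcases z with n | n
  · rw [show Encodable.encode (Int.ofNat n) = 2 * n from rfl]
    simp [codedPos, codedNeg]
  · rw [show Encodable.encode (Int.negSucc n) = 2 * n + 1 from rfl]
    simp only [codedPos, codedNeg, Nat.mul_add_mod_self_left, show (2 * n + 1) / 2 = n by omega,
      Int.negSucc_eq]
    simp

theorem primrec_codedPos : Primrec codedPos :=
  Primrec.ite (Primrec.eq.comp (Primrec.nat_mod.comp .id (.const 2)) (.const 0))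
    (Primrec.nat_div.comp .id (.const 2)) (.const 0)

theorem primrec_codedNeg : Primrec codedNeg :=
  Primrec.ite (Primrec.eq.comp (Primrec.nat_mod.comp .id (.const 2)) (.const 0)) (.const 0)
    (Primrec.succ.comp (Primrec.nat_div.comp .id (.const 2)))

/-- One side of the inequality obtained by clearing denominators when a fraction with denominator
`x.2.1` is compared with the rational number of code `x.2.2`. -/
def crossMul (f : ℕ → ℕ) (x : ℕ × ℕ × ℕ) : ℕ :=
  x.1 * x.2.2.unpair.2 + f x.2.2.unpair.1 * x.2.1

theorem primrec_crossMul {f : ℕ → ℕ} (hf : Primrec f) : Primrec (crossMul f) := by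
  have code : Primrec fun x : ℕ × ℕ × ℕ => x.2.2.unpair := Primrec.unpair.comp (.comp .snd .snd)
  exact Primrec.nat_add.comp (Primrec.nat_mul.comp .fst (.comp .snd code))
    (Primrec.nat_mul.comp (hf.comp (.comp .fst code)) (.comp .fst .snd))

theorem crossMul_sub_crossMul {c : ℕ} (hc : 0 < c) (a b : ℕ) (q : ℚ) :
    (crossMul codedPos (b, c, Encodable.encode q) : ℝ) -
        crossMul codedNeg (a, c, Encodable.encode q) = q.den * c * (q - ((a : ℝ) - b) / c) := by
  have hnum : (codedPos (Encodable.encode q.num) : ℝ) - codedNeg (Encodable.encode q.num) =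
      q.num := by
    exact_mod_cast codedPos_sub_codedNeg q.num
  have hden : (q.den : ℝ) ≠ 0 := by exact_mod_cast q.den_nz
  have hc' : (c : ℝ) ≠ 0 := by exact_mod_cast hc.ne'
  rw [show Encodable.encode q = Nat.pair (Encodable.encode q.num) q.den from rfl, crossMul,
    crossMul, Nat.unpair_pair, Rat.cast_def]
  push_cast
  field_simp
  linear_combination (c : ℝ) * hnum

theorem sub_div_le_cast_iff {c : ℕ} (hc : 0 < c) (a b : ℕ) (q : ℚ) : ((a : ℝ) - b) / c ≤ q ↔
    crossMul codedNeg (a, c, Encodable.encode q) ≤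
      crossMul codedPos (b, c, Encodable.encode q) := by
  have hpos : 0 < (q.den : ℝ) * c := by exact_mod_cast Nat.mul_pos q.den_pos hc
  rw [← sub_nonneg, ← mul_nonneg_iff_of_pos_left hpos, ← crossMul_sub_crossMul hc, sub_nonneg,
    Nat.cast_le]

theorem cast_le_sub_div_iff {c : ℕ} (hc : 0 < c) (a b : ℕ) (q : ℚ) : q ≤ ((a : ℝ) - b) / c ↔
    crossMul codedPos (b, c, Encodable.encode q) ≤
      crossMul codedNeg (a, c, Encodable.encode q) := by
  have hpos : 0 < (q.den : ℝ) * c := by exact_mod_cast Nat.mul_pos q.den_pos hc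
  rw [← not_lt, ← sub_pos, ← mul_pos_iff_of_pos_left hpos, ← crossMul_sub_crossMul hc, sub_pos,
    Nat.cast_lt, not_lt]

end RationalCodes

theorem primrec₂_pow : Primrec₂ fun a b : ℕ => a ^ b := Primrec₂.unpaired'.1 Nat.Primrec.pow

/-- The numbers coding a triple `(i, p, q)` such that the interval `(p, q)` lies inside a ball of
radius `2⁻¹ ^ k` around a dyadic rational `N / 2 ^ e` with `B (i, N, e, k)`. -/
def ballTest (B : ℕ × ℕ × ℕ × ℕ → Prop) : Set ℕ :=
  {m | ∃ b : ℕ × ℕ × ℕ, B (m.unpair.1, b) ∧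
    crossMul codedNeg (b.1 * 2 ^ b.2.2, 2 ^ (b.2.1 + b.2.2), m.unpair.2.unpair.1) ≤
      crossMul codedPos (2 ^ b.2.1, 2 ^ (b.2.1 + b.2.2), m.unpair.2.unpair.1) ∧
    crossMul codedPos (0, 2 ^ (b.2.1 + b.2.2), m.unpair.2.unpair.2) ≤
      crossMul codedNeg (b.1 * 2 ^ b.2.2 + 2 ^ b.2.1, 2 ^ (b.2.1 + b.2.2), m.unpair.2.unpair.2)}

theorem testSet_ballTest (B : ℕ × ℕ × ℕ × ℕ → Prop) (i : ℕ) :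
    testSet (ballTest B) i =
      ⋃ b ∈ {b : ℕ × ℕ × ℕ | B (i, b)}, Metric.ball ((b.1 : ℝ) / 2 ^ b.2.1) (2⁻¹ ^ b.2.2) := by
  have mem_ballTest (p q : ℚ) : Nat.pair i (Encodable.encode (p, q)) ∈ ballTest B ↔
      ∃ b : ℕ × ℕ × ℕ, B (i, b) ∧ (b.1 : ℝ) / 2 ^ b.2.1 - 2⁻¹ ^ b.2.2 ≤ p ∧
        q ≤ (b.1 : ℝ) / 2 ^ b.2.1 + 2⁻¹ ^ b.2.2 := by
    have left (b : ℕ × ℕ × ℕ) : (b.1 : ℝ) / 2 ^ b.2.1 - 2⁻¹ ^ b.2.2 =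
        ((b.1 * 2 ^ b.2.2 : ℕ) - (2 ^ b.2.1 : ℕ)) / (2 ^ (b.2.1 + b.2.2) : ℕ) := by
      push_cast
      rw [inv_pow]
      field_simp
      ring
    have right (b : ℕ × ℕ × ℕ) : (b.1 : ℝ) / 2 ^ b.2.1 + 2⁻¹ ^ b.2.2 =
        ((b.1 * 2 ^ b.2.2 + 2 ^ b.2.1 : ℕ) - (0 : ℕ)) / (2 ^ (b.2.1 + b.2.2) : ℕ) := by
      push_cast
      rw [inv_pow]
      field_simp
      ring
    simp only [ballTest, Set.mem_ofPred_eq, Encodable.encode_prod_val, Nat.unpair_pair, left, right,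
      sub_div_le_cast_iff (Nat.two_pow_pos _), cast_le_sub_div_iff (Nat.two_pow_pos _)]
  ext x
  simp only [testSet, Set.mem_ofPred_eq, mem_ballTest, Set.mem_iUnion₂, Metric.mem_ball,
    Real.dist_eq, abs_sub_lt_iff, exists_prop]
  constructor
  · rintro ⟨p, q, ⟨b, hb, hp, hq⟩, hpx, hxq⟩
    exact ⟨b, hb, by linarith, by linarith⟩
  · rintro ⟨b, hb, hr, hl⟩
    obtain ⟨p, hp, hpx⟩ := exists_rat_btwn (sub_lt_comm.1 hl)
    obtain ⟨q, hxq, hq⟩ := exists_rat_btwn (sub_lt_iff_lt_add'.1 hr)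
    exact ⟨p, q, ⟨b, hb, hp.le, hq.le⟩, hpx, hxq⟩

theorem ceIn_ballTest {n : ℕ} {B : ℕ × ℕ × ℕ × ℕ → Prop} (hB : IsSigma (n + 1) B) :
    CeIn (iterJump n) (ballTest B) := by
  have index : Primrec fun x : ℕ × ℕ × ℕ × ℕ => x.1.unpair := Primrec.unpair.comp .fst
  have interval : Primrec fun x : ℕ × ℕ × ℕ × ℕ => x.1.unpair.2.unpair :=
    Primrec.unpair.comp (.comp .snd index)
  have num : Primrec fun x : ℕ × ℕ × ℕ × ℕ => x.2.1 := .comp .fst .snd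
  have exp : Primrec fun x : ℕ × ℕ × ℕ × ℕ => x.2.2.1 := .comp .fst (.comp .snd .snd)
  have prec : Primrec fun x : ℕ × ℕ × ℕ × ℕ => x.2.2.2 := .comp .snd (.comp .snd .snd)
  have pow {f : ℕ × ℕ × ℕ × ℕ → ℕ} (hf : Primrec f) : Primrec fun x => 2 ^ f x :=
    primrec₂_pow.comp (.const 2) hf
  have den := pow (Primrec.nat_add.comp exp prec)
  have scaled := Primrec.nat_mul.comp num (pow prec)
  have left := Primrec.nat_le.comp
    ((primrec_crossMul primrec_codedNeg).comp (scaled.pair (den.pair (.comp .fst interval))))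
    ((primrec_crossMul primrec_codedPos).comp ((pow exp).pair (den.pair (.comp .fst interval))))
  have right := Primrec.nat_le.comp
    ((primrec_crossMul primrec_codedPos).comp
      ((Primrec.const 0).pair (den.pair (.comp .snd interval))))
    ((primrec_crossMul primrec_codedNeg).comp
      ((Primrec.nat_add.comp scaled (pow exp)).pair (den.pair (.comp .snd interval))))
  exact ((hB.comp (Primrec.pair (.comp .fst index) .snd).to_comp).and
    ((IsSigma.of_computable left.computablePred).and
      (.of_computable right.computablePred))).exists_of.ceIn

/-! ### Covering a sequence of reals by balls -/

theorem volume_ball_diff_ball_le (x y δ : ℝ) :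
    volume (Metric.ball y δ \ Metric.ball x δ) ≤ ENNReal.ofReal |y - x| := by
  rcases le_total x y with h | h
  · refine (measure_mono (t := Set.Ico (x + δ) (y + δ)) ?_).trans_eq ?_
    · rintro z ⟨hzy, hzx⟩
      simp only [Real.ball_eq_Ioo, Set.mem_Ioo, not_and, not_lt] at hzx hzy
      exact ⟨hzx (by linarith), hzy.2⟩
    · rw [Real.volume_Ico, abs_of_nonneg (sub_nonneg.2 h), add_sub_add_right_eq_sub]
  · refine (measure_mono (t := Set.Ioc (y - δ) (x - δ)) ?_).trans_eq ?_
    · rintro z ⟨hzy, hzx⟩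
      simp only [Real.ball_eq_Ioo, Set.mem_Ioo, not_and, not_lt] at hzx hzy
      exact ⟨hzy.1, not_lt.1 fun hz => absurd (hzx hz) (by linarith)⟩
    · rw [Real.volume_Ioc, abs_of_nonpos (sub_nonpos.2 h), sub_sub_sub_cancel_right, neg_sub]

theorem volume_iUnion_ball_le {x : ℕ → ℝ} {δ C : ℝ} (hδ : 0 ≤ δ)
    (hC : ∀ t, ∑ s ∈ Finset.range t, min |x (s + 1) - x s| (2 * δ) ≤ C) :
    volume (⋃ t, Metric.ball (x t) δ) ≤ ENNReal.ofReal (2 * δ + C) := by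
  have new_part (t : ℕ) : volume (Metric.ball (x (t + 1)) δ \ Metric.ball (x t) δ) ≤
      ENNReal.ofReal (min |x (t + 1) - x t| (2 * δ)) := by
    rw [ENNReal.ofReal_min, ← Real.volume_ball (x (t + 1))]
    exact le_min (volume_ball_diff_ball_le _ _ _) (measure_mono Set.sdiff_subset)
  have accumulate (t : ℕ) : volume (Set.accumulate (fun t => Metric.ball (x t) δ) t) ≤
      ENNReal.ofReal (2 * δ + ∑ s ∈ Finset.range t, min |x (s + 1) - x s| (2 * δ)) := by
    induction t with
    | zero => simp [Set.accumulate, Real.volume_ball]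
    | succ t ih =>
      have hmin (s : ℕ) : 0 ≤ min |x (s + 1) - x s| (2 * δ) := le_min (abs_nonneg _) (by positivity)
      have hsum : 0 ≤ 2 * δ + ∑ s ∈ Finset.range t, min |x (s + 1) - x s| (2 * δ) :=
        add_nonneg (by positivity) (Finset.sum_nonneg fun s _ => hmin s)
      rw [Set.accumulate_succ, ← Set.union_sdiff_self, Finset.sum_range_succ, ← add_assoc,
        ENNReal.ofReal_add hsum (hmin t)]
      refine (measure_union_le _ _).trans (add_le_add ih ((measure_mono ?_).trans (new_part t)))
      exact Set.sdiff_subset_sdiff_right (Set.subset_accumulate (s := fun t => Metric.ball (x t) δ))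
  rw [measure_iUnion_eq_iSup_accumulate]
  exact iSup_le fun t => (accumulate t).trans (ENNReal.ofReal_le_ofReal (by linarith [hC t]))

theorem sum_min_sum_sub_le {ι : Type*} [DecidableEq ι] {w : ι → ℝ} (hw : ∀ m, 0 ≤ w m)
    {T : ℕ → Finset ι} (hT : Monotone T) (F : Finset ι) {δ : ℝ} (hδ : 0 ≤ δ) (t : ℕ) :
    ∑ s ∈ Finset.range t, min |∑ m ∈ T (s + 1), w m - ∑ m ∈ T s, w m| δ ≤
      ∑ m ∈ T t \ F, w m + (T t ∩ F).card * δ := by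
  induction t with
  | zero => exact add_nonneg (Finset.sum_nonneg fun m _ => hw m) (by positivity)
  | succ t ih =>
    have hsub := hT t.le_succ
    have hdiff : ∑ m ∈ T t \ F, w m ≤ ∑ m ∈ T (t + 1) \ F, w m :=
      Finset.sum_le_sum_of_subset_of_nonneg (Finset.sdiff_subset_sdiff hsub le_rfl)
        fun m _ _ => hw m
    rw [Finset.sum_range_succ]
    rcases (Finset.inter_subset_inter_right hsub : T t ∩ F ⊆ T (t + 1) ∩ F).eq_or_ssubset
      with heq | hlt
    · have hsum (s : ℕ) := Finset.sum_inter_add_sum_sdiff (T s) F w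
      have hmono : ∑ m ∈ T t, w m ≤ ∑ m ∈ T (t + 1), w m :=
        Finset.sum_le_sum_of_subset_of_nonneg hsub fun m _ _ => hw m
      have hstep := min_le_left |∑ m ∈ T (t + 1), w m - ∑ m ∈ T t, w m| δ
      rw [abs_of_nonneg (sub_nonneg.2 hmono)] at hstep ⊢
      rw [← heq]
      linarith [hsum t, heq ▸ hsum (t + 1)]
    · have hcard : ((T t ∩ F).card : ℝ) + 1 ≤ (T (t + 1) ∩ F).card := by
        exact_mod_cast Finset.card_lt_card hlt
      have hstep := min_le_right |∑ m ∈ T (t + 1), w m - ∑ m ∈ T t, w m| δ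
      nlinarith

theorem volume_iUnion_ball_sum_le {ι : Type*} [DecidableEq ι] {w : ι → ℝ} (hw : ∀ m, 0 ≤ w m)
    {T : ℕ → Finset ι} (hT : Monotone T) (F : Finset ι) {ε δ : ℝ} (hδ : 0 ≤ δ)
    (hε : ∀ t, ∑ m ∈ T t \ F, w m ≤ ε) :
    volume (⋃ t, Metric.ball (∑ m ∈ T t, w m) δ) ≤
      ENNReal.ofReal (ε + (F.card + 1) * (2 * δ)) := by
  refine (volume_iUnion_ball_le (C := ε + F.card * (2 * δ)) hδ fun t => ?_).trans_eq
    (congrArg _ (by ring))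
  refine (sum_min_sum_sub_le hw hT F (by positivity) t).trans (add_le_add (hε t) ?_)
  gcongr
  exact Finset.inter_subset_right

/-! ### Sums of dyadic weights over sets of naturals -/

theorem computable_sum_range {f : ℕ → ℕ} (hf : Computable f) :
    Computable fun t => ∑ m ∈ Finset.range t, f m :=
  (computable₂_sum_range (α := Unit) (f := fun _ => f) (hf.comp .snd)).comp (.const ()) .id

theorem IsSigma.exists_stages {n : ℕ} {A : Set ℕ} (hA : IsSigma (n + 1) (· ∈ A)) :
    ∃ T : ℕ → Finset ℕ, Monotone T ∧ (∀ t, T t ⊆ Finset.range t) ∧ (∀ m, m ∈ A ↔ ∃ t, m ∈ T t) ∧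
      IsSigma (n + 1) (fun x : ℕ × ℕ => x.2 ∈ T x.1) ∧
      IsSigma (n + 1) (fun x : ℕ × ℕ => x.2 ∉ T x.1) := by
  obtain ⟨q, hq, hAq⟩ := hA
  have mem_stage (t m : ℕ) :
      m ∈ (Finset.range t).filter (fun m => ∃ k < t, ¬ q (m, k)) ↔ m < t ∧ ∃ k < t, ¬ q (m, k) := by
    rw [Finset.mem_filter, Finset.mem_range]
  have lt : ComputablePred fun x : ℕ × ℕ => x.2 < x.1 :=
    (Primrec.nat_lt.comp .snd .fst).computablePred
  have inst : Computable fun x : (ℕ × ℕ) × ℕ => (x.1.2, x.2) :=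
    (Computable.comp .snd .fst).pair .snd
  refine ⟨fun t => (Finset.range t).filter fun m => ∃ k < t, ¬ q (m, k), fun s t hst m => ?_,
    fun t => Finset.filter_subset _ _, fun m => ?_, ?_, ?_⟩
  · simp only [mem_stage]
    exact fun ⟨hm, k, hk, hmk⟩ => ⟨hm.trans_le hst, k, hk.trans_le hst, hmk⟩
  · simp only [mem_stage, hAq]
    refine ⟨fun ⟨k, hk⟩ => ⟨m + k + 1, by omega, k, by omega, hk⟩, fun ⟨_, _, k, _, hk⟩ => ⟨k, hk⟩⟩
  · exact ((IsSigma.of_computable lt).and ((hq.not.comp inst).exists_lt .fst)).of_iff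
      fun x => mem_stage _ _
  · refine ((IsSigma.of_computable lt.not).or ((hq.succ.comp inst).forall_lt .fst)).of_iff
      fun x => ?_
    rw [mem_stage, not_and_or]
    simp only [not_exists, not_and, not_not]

theorem IsSigma.exists_dyadic_stages {n : ℕ} {A : Set ℕ} (hA : IsSigma (n + 1) (· ∈ A)) {ℓ : ℕ → ℕ}
    (hℓ : Computable ℓ) :
    ∃ (T : ℕ → Finset ℕ) (N : ℕ → ℕ), Monotone T ∧ (∀ t, T t ⊆ Finset.range t) ∧
      (∀ m, m ∈ A ↔ ∃ t, m ∈ T t) ∧ IsSigmaFun (n + 1) N ∧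
      ∀ t, ∑ m ∈ T t, (2 : ℝ)⁻¹ ^ ℓ m = N t / 2 ^ ∑ m ∈ Finset.range t, ℓ m := by
  obtain ⟨T, hmono, hsub, hAT, hT, hT'⟩ := hA.exists_stages
  let e (t : ℕ) : ℕ := ∑ m ∈ Finset.range t, ℓ m
  have he : Computable e := computable_sum_range hℓ
  have hpow : Computable fun x : ℕ × ℕ => 2 ^ (e x.1 - ℓ x.2) :=
    primrec₂_pow.to_comp.comp (.const 2)
      (Primrec.nat_sub.to_comp.comp (he.comp .fst) (hℓ.comp .snd))
  have hN := IsSigmaFun.sum_range (IsSigmaFun.ite hT hT' hpow (.const 0)) Computable.id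
  refine ⟨T, _, hmono, hsub, hAT, hN, fun t => ?_⟩
  have scaled (m : ℕ) (hm : m ∈ T t) : (2 : ℝ)⁻¹ ^ ℓ m = 2 ^ (e t - ℓ m) / 2 ^ e t := by
    have hle : ℓ m ≤ e t := Finset.single_le_sum (f := ℓ) (fun _ _ => Nat.zero_le _) (hsub t hm)
    rw [inv_pow, pow_sub₀ _ two_ne_zero hle, mul_div_cancel_left₀ _ (by positivity)]
  calc ∑ m ∈ T t, (2 : ℝ)⁻¹ ^ ℓ m
      = ∑ m ∈ T t, (2 : ℝ) ^ (e t - ℓ m) / 2 ^ e t := Finset.sum_congr rfl scaled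
    _ = (∑ m ∈ Finset.range t with m ∈ T t, (2 : ℝ) ^ (e t - ℓ m)) / 2 ^ e t := by
        rw [Finset.sum_div, Finset.filter_mem_eq_inter, Finset.inter_eq_right.2 (hsub t)]
    _ = _ := by
        rw [Finset.sum_filter]
        push_cast
        rfl

theorem tendsto_sum_of_hasSum_indicator {T : ℕ → Finset ℕ} (hT : Monotone T) {A : Set ℕ}
    (hA : ∀ m, m ∈ A ↔ ∃ t, m ∈ T t) {w : ℕ → ℝ} {α : ℝ} (hα : HasSum (A.indicator w) α) :
    Filter.Tendsto (fun t => ∑ m ∈ T t, w m) Filter.atTop (nhds α) := by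
  have exhaust : Filter.Tendsto (fun t => (T t).subtype (· ∈ A)) Filter.atTop Filter.atTop :=
    Filter.tendsto_atTop_finset_of_monotone (fun s t hst => Finset.subtype_mono (hT hst))
      fun m => ((hA m).1 m.2).imp fun t ht => Finset.mem_subtype.2 ht
  refine ((hasSum_subtype_iff_indicator.2 hα).comp exhaust).congr fun t => ?_
  exact Finset.sum_subtype_of_mem w fun m hm => (hA m).2 ⟨t, hm⟩

theorem exists_forall_le_add_of_tendsto {u : ℕ → ℝ} (hu : Monotone u) {β ε : ℝ}
    (hβ : Filter.Tendsto u Filter.atTop (nhds β)) (hε : 0 < ε) : ∃ g, ∀ t, u t ≤ u g + ε := by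
  obtain ⟨g, hg⟩ := (hβ.eventually (lt_mem_nhds (sub_lt_self β hε))).exists
  exact ⟨g, fun t => by linarith [hu.ge_of_tendsto hβ t]⟩

theorem sum_sdiff_le_of_forall_sum_le {T : ℕ → Finset ℕ} (hT : Monotone T) {w : ℕ → ℝ}
    (hw : ∀ m, 0 ≤ w m) {g : ℕ} {ε : ℝ} (hg : ∀ t, ∑ m ∈ T t, w m ≤ ∑ m ∈ T g, w m + ε)
    {F : Finset ℕ} (hF : ∀ m ∈ F, ∃ t, m ∈ T t) : ∑ m ∈ F \ T g, w m ≤ ε := by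
  have covered : ∀ᶠ t in Filter.atTop, ∀ m ∈ F, m ∈ T t := by
    refine (Finset.eventually_all _).2 fun m hm => ?_
    obtain ⟨s, hs⟩ := hF m hm
    filter_upwards [Filter.eventually_ge_atTop s] with t hst using hT hst hs
  obtain ⟨t, hFt, hgt⟩ := (covered.and (Filter.eventually_ge_atTop g)).exists
  have := Finset.sum_sdiff (f := w) (hT hgt)
  have := Finset.sum_le_sum_of_subset_of_nonneg (Finset.sdiff_subset_sdiff hFt (subset_refl (T g)))
    fun m _ _ => hw m
  linarith [hg t]

theorem computablePred_div_le_div_add :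
    ComputablePred fun x : (ℕ × ℕ) × (ℕ × ℕ) × ℕ =>
      (x.1.1 : ℝ) / 2 ^ x.1.2 ≤ (x.2.1.1 : ℝ) / 2 ^ x.2.1.2 + 2⁻¹ ^ x.2.2 := by
  have cross (a c b d i : ℕ) : a * 2 ^ (d + i) ≤ b * 2 ^ (c + i) + 2 ^ (c + d) ↔
      (a : ℝ) / 2 ^ c ≤ (b : ℝ) / 2 ^ d + 2⁻¹ ^ i := by
    rw [inv_pow, ← one_div, div_add_div _ _ (by positivity) (by positivity),
      div_le_div_iff₀ (by positivity) (by positivity), ← Nat.cast_le (α := ℝ)]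
    push_cast
    simp only [pow_add]
    ring_nf
  have a : Primrec fun x : (ℕ × ℕ) × (ℕ × ℕ) × ℕ => x.1.1 := .comp .fst .fst
  have c : Primrec fun x : (ℕ × ℕ) × (ℕ × ℕ) × ℕ => x.1.2 := .comp .snd .fst
  have b : Primrec fun x : (ℕ × ℕ) × (ℕ × ℕ) × ℕ => x.2.1.1 := .comp .fst (.comp .fst .snd)
  have d : Primrec fun x : (ℕ × ℕ) × (ℕ × ℕ) × ℕ => x.2.1.2 := .comp .snd (.comp .fst .snd)
  have i : Primrec fun x : (ℕ × ℕ) × (ℕ × ℕ) × ℕ => x.2.2 := .comp .snd .snd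
  have two_pow_add {f g : (ℕ × ℕ) × (ℕ × ℕ) × ℕ → ℕ} (hf : Primrec f) (hg : Primrec g) :
      Primrec fun x => 2 ^ (f x + g x) :=
    primrec₂_pow.comp (.const 2) (Primrec.nat_add.comp hf hg)
  exact (Primrec.nat_le.comp (Primrec.nat_mul.comp a (two_pow_add d i))
    (Primrec.nat_add.comp (Primrec.nat_mul.comp b (two_pow_add c i))
      (two_pow_add c d))).computablePred.of_eq fun x => cross _ _ _ _ _

theorem isSigma_forall_div_le_add {n : ℕ} {N e : ℕ → ℕ} (hN : IsSigmaFun (n + 1) N)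
    (he : Computable e) :
    IsSigma (n + 2) fun x : ℕ × ℕ =>
      ∀ t, (N t : ℝ) / 2 ^ e t ≤ (N x.2 : ℝ) / 2 ^ e x.2 + 2⁻¹ ^ x.1 := by
  have exceeds : IsSigma (n + 1) fun x : (((ℕ × ℕ) × ℕ) × ℕ) × ℕ =>
      ¬ (x.1.2 : ℝ) / 2 ^ e x.1.1.2 ≤ (x.2 : ℝ) / 2 ^ e x.1.1.1.2 + 2⁻¹ ^ x.1.1.1.1 := by
    refine (IsSigma.of_computable computablePred_div_le_div_add.not).comp
      (f := fun x : (((ℕ × ℕ) × ℕ) × ℕ) × ℕ =>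
        ((x.1.2, e x.1.1.2), (x.2, e x.1.1.1.2), x.1.1.1.1)) ?_
    have stage : Computable fun x : (((ℕ × ℕ) × ℕ) × ℕ) × ℕ => x.1.1.1 :=
      .comp .fst (.comp .fst .fst)
    exact (Computable.pair (.comp .snd .fst) (he.comp (.comp .snd (.comp .fst .fst)))).pair
      ((Computable.pair .snd (he.comp (.comp .snd stage))).pair (.comp .fst stage))
  have exceeds_sum := (exceeds.comp_isSigmaFun
    (f := fun x : ((ℕ × ℕ) × ℕ) × ℕ => N x.1.1.2) (hN.comp (.comp .snd (.comp .fst .fst)))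
    ).comp_isSigmaFun (f := fun x : (ℕ × ℕ) × ℕ => N x.2) (hN.comp .snd)
  exact exceeds_sum.exists_of.not.of_iff fun x => by simp only [not_exists, not_not]

theorem volume_iUnion_ball_le_of_tail {T V : ℕ → Finset ℕ} (hT : Monotone T)
    (hTt : ∀ t, T t ⊆ Finset.range t) (hV : Monotone V) (hVT : ∀ t, ∀ m ∈ V t, ∃ s, m ∈ T s)
    {w : ℕ → ℝ} (hw : ∀ m, 0 ≤ w m) (i : ℕ) :
    volume (⋃ g ∈ {g | ∀ t, ∑ m ∈ T t, w m ≤ ∑ m ∈ T g, w m + 2⁻¹ ^ (i + 1)},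
      ⋃ t, Metric.ball (∑ m ∈ V t, w m) (2⁻¹ ^ (i + g + 2))) ≤ ENNReal.ofReal (2⁻¹ ^ i) := by
  set G := {g | ∀ t, ∑ m ∈ T t, w m ≤ ∑ m ∈ T g, w m + 2⁻¹ ^ (i + 1)}
  rcases G.eq_empty_or_nonempty with hempty | hne
  · simp [hempty]
  obtain ⟨g₀, hg₀, hmin⟩ : ∃ g₀ ∈ G, ∀ g ∈ G, g₀ ≤ g :=
    ⟨sInf G, Nat.sInf_mem hne, fun g hg => Nat.sInf_le hg⟩
  have tail (t : ℕ) : ∑ m ∈ V t \ T g₀, w m ≤ 2⁻¹ ^ (i + 1) :=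
    sum_sdiff_le_of_forall_sum_le hT hw hg₀ (hVT t)
  have card_le : (T g₀).card + 1 ≤ 2 ^ g₀ :=
    ((Finset.card_le_card (hTt g₀)).trans_eq (Finset.card_range g₀)).trans_lt g₀.lt_two_pow_self
  calc _ ≤ volume (⋃ t, Metric.ball (∑ m ∈ V t, w m) ((2 : ℝ)⁻¹ ^ (i + g₀ + 2))) := by
        refine measure_mono (Set.iUnion₂_subset fun g hg => Set.iUnion_mono fun t => ?_)
        exact Metric.ball_subset_ball (pow_le_pow_of_le_one (by norm_num) (by norm_num)
          (by have := hmin g hg; omega))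
    _ ≤ ENNReal.ofReal (2⁻¹ ^ (i + 1) + ((T g₀).card + 1) * (2 * 2⁻¹ ^ (i + g₀ + 2))) :=
        volume_iUnion_ball_sum_le hw hV (T g₀) (by positivity) tail
    _ ≤ ENNReal.ofReal (2⁻¹ ^ (i + 1) + 2 ^ g₀ * (2 * 2⁻¹ ^ (i + g₀ + 2))) := by
        gcongr
        exact_mod_cast card_le
    _ = ENNReal.ofReal (2⁻¹ ^ i) := by
        congr 1
        simp only [inv_pow]
        field_simp
        ring

theorem IsSigma.exists_ceIn_testSet_eq {n : ℕ} {G : ℕ × ℕ → Prop} (hG : IsSigma (n + 1) G)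
    {N e : ℕ → ℕ} (hN : IsSigmaFun (n + 1) N) (he : Computable e) {r : ℕ × ℕ → ℕ}
    (hr : Computable r) :
    ∃ W, CeIn (iterJump n) W ∧ ∀ i, testSet W i = ⋃ g ∈ {g | G (i, g)},
      ⋃ t, Metric.ball ((N t : ℝ) / 2 ^ e t) (2⁻¹ ^ r (i, g)) := by
  let B (b : ℕ × ℕ × ℕ × ℕ) : Prop :=
    ∃ x : ℕ × ℕ, G (b.1, x.1) ∧ N x.2 = b.2.1 ∧ e x.2 = b.2.2.1 ∧ r (b.1, x.1) = b.2.2.2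
  have index : Computable fun x : (ℕ × ℕ × ℕ × ℕ) × ℕ × ℕ => (x.1.1, x.2.1) :=
    .pair (.comp .fst .fst) (.comp .fst .snd)
  have stage : Computable fun x : (ℕ × ℕ × ℕ × ℕ) × ℕ × ℕ => x.2.2 := .comp .snd .snd
  have data : Computable fun x : (ℕ × ℕ × ℕ × ℕ) × ℕ × ℕ => x.1.2 := .comp .snd .fst
  have eq : ComputablePred fun x : ℕ × ℕ => x.1 = x.2 := Primrec.eq.computablePred
  have num := IsSigma.comp hN (stage.pair (.comp .fst data))
  have exp := (IsSigma.of_computable (n := n + 1) eq).comp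
    ((he.comp stage).pair (.comp .fst (.comp .snd data)))
  have prec := (IsSigma.of_computable (n := n + 1) eq).comp
    ((hr.comp index).pair (.comp .snd (.comp .snd data)))
  have hB : IsSigma (n + 1) B := ((hG.comp index).and (num.and (exp.and prec))).exists_of
  refine ⟨ballTest B, ceIn_ballTest hB, fun i => ?_⟩
  simp only [testSet_ballTest, B]
  ext y
  simp only [Set.mem_iUnion, Set.mem_ofPred_eq, exists_prop, Prod.exists]
  constructor
  · rintro ⟨_, _, _, ⟨g, t, hg, rfl, rfl, rfl⟩, hy⟩
    exact ⟨g, hg, t, hy⟩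
  · rintro ⟨g, hg, t, hy⟩
    exact ⟨_, _, _, ⟨g, t, hg, rfl, rfl, rfl⟩, hy⟩

theorem not_mlRandomIn_of_hasSum {n : ℕ} {D S : Set ℕ} (hD : IsSigma (n + 1) (· ∈ D))
    (hS : IsSigma (n + 2) (· ∈ S)) (hSD : S ⊆ D) {ℓ : ℕ → ℕ} (hℓ : Computable ℓ)
    (hsum : Summable (D.indicator fun m => (2 : ℝ)⁻¹ ^ ℓ m)) {α : ℝ}
    (hα : HasSum (S.indicator fun m => (2 : ℝ)⁻¹ ^ ℓ m) α) :
    ¬ MLRandomIn (iterJump (n + 1)) α := by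
  obtain ⟨T, N, hT, hTt, hDT, hN, hTN⟩ := hD.exists_dyadic_stages hℓ
  obtain ⟨V, K, hV, -, hSV, hK, hVK⟩ := hS.exists_dyadic_stages hℓ
  let Good (i g : ℕ) : Prop := ∀ t, ∑ m ∈ T t, (2 : ℝ)⁻¹ ^ ℓ m ≤ ∑ m ∈ T g, 2⁻¹ ^ ℓ m + 2⁻¹ ^ i
  have isSigma_good : IsSigma (n + 2) fun x : ℕ × ℕ => Good (x.1 + 1) x.2 :=
    ((isSigma_forall_div_le_add hN (computable_sum_range hℓ)).comp
      (.pair (Computable.succ.comp .fst) .snd)).of_iff fun x => by simp only [Good, hTN]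
  obtain ⟨W, hW, test⟩ := isSigma_good.exists_ceIn_testSet_eq hK (computable_sum_range hℓ)
    (r := fun x => x.1 + x.2 + 2) (Primrec.nat_add.comp Primrec.nat_add (.const 2)).to_comp
  simp only [← hVK] at test
  intro random
  obtain ⟨i, hi⟩ := random W hW fun i => by
    rw [test]
    exact volume_iUnion_ball_le_of_tail hT hTt hV
      (fun t m hm => (hDT m).1 (hSD ((hSV m).2 ⟨t, hm⟩))) (fun m => by positivity) i
  obtain ⟨g, hg⟩ : ∃ g, Good (i + 1) g :=
    exists_forall_le_add_of_tendsto
      (fun s t hst => Finset.sum_le_sum_of_subset_of_nonneg (hT hst) fun m _ _ => by positivity)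
      (tendsto_sum_of_hasSum_indicator hT hDT hsum.hasSum) (by positivity)
  obtain ⟨t, ht⟩ := ((tendsto_sum_of_hasSum_indicator hV hSV hα).eventually
    (Metric.ball_mem_nhds α (ε := 2⁻¹ ^ (i + g + 2)) (by positivity))).exists
  rw [test] at hi
  exact hi (Set.mem_iUnion₂.2 ⟨g, hg, Set.mem_iUnion.2 ⟨t, Metric.mem_ball_comm.1 ht⟩⟩)

/-! ### The uniform measure of a prefix-free set of strings -/

theorem length_initSeg (X : Cantor) (n : ℕ) : (initSeg X n).length = n := by
  simp [initSeg]

theorem initSeg_prefix_initSeg (X : Cantor) {m n : ℕ} (h : m ≤ n) :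
    initSeg X m <+: initSeg X n := by
  refine List.IsPrefix.map X (List.prefix_iff_eq_take.2 ?_)
  simp [List.take_range, h]

theorem mem_cyl_singleton {X : Cantor} {σ : List Bool} :
    X ∈ cyl {σ} ↔ initSeg X σ.length = σ :=
  ⟨fun ⟨n, (hn : initSeg X n = σ)⟩ => by rw [← hn, length_initSeg], fun h => ⟨_, h⟩⟩

theorem mem_cyl_append_singleton {X : Cantor} {σ : List Bool} {b : Bool} :
    X ∈ cyl {σ ++ [b]} ↔ X ∈ cyl {σ} ∧ X σ.length = b := by
  rw [mem_cyl_singleton, mem_cyl_singleton, List.length_append, List.length_singleton, initSeg,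
    List.range_succ, List.map_append]
  simp [initSeg]

theorem measurable_digits : Measurable digits :=
  measurable_pi_lambda _ fun _ =>
    (measurable_of_countable fun z : ℤ => decide (z % 2 = 1)).comp
      (Int.measurable_floor.comp (measurable_id.mul_const _))

theorem measurableSet_cyl_singleton (σ : List Bool) : MeasurableSet (cyl {σ}) := by
  induction σ using List.reverseRecOn with
  | nil => exact MeasurableSet.univ.congr (Set.ext fun X => by simp [mem_cyl_singleton, initSeg])
  | append_singleton σ b ih =>
    convert ih.inter
      (measurableSet_eq_fun (measurable_pi_apply σ.length) (measurable_const (a := b)))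
    ext X
    exact mem_cyl_append_singleton

theorem exists_forall_digits_mem_cyl_iff (σ : List Bool) :
    ∃ k < 2 ^ σ.length, ∀ x ∈ Set.Ico (0 : ℝ) 1,
      digits x ∈ cyl {σ} ↔ ⌊x * 2 ^ σ.length⌋ = (k : ℕ) := by
  induction σ using List.reverseRecOn with
  | nil =>
    refine ⟨0, Nat.one_pos, fun x hx => ?_⟩
    simpa [mem_cyl_singleton, initSeg] using hx
  | append_singleton σ b ih =>
    obtain ⟨k, hk, h⟩ := ih
    refine ⟨2 * k + b.toNat, ?_, fun x hx => ?_⟩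
    · rw [List.length_append, List.length_singleton, pow_succ]
      cases b <;> simp <;> omega
    · have half : ⌊x * 2 ^ σ.length⌋ = ⌊x * 2 ^ (σ.length + 1)⌋ / 2 := by
        rw [pow_succ, ← mul_assoc]
        exact (Int.mul_natCast_floor_div_cancel two_ne_zero _).symm
      rw [mem_cyl_append_singleton, h x hx, half, digits, List.length_append, List.length_singleton]
      cases b <;> simp <;> omega

theorem mu_cyl_singleton (σ : List Bool) :
    mu (cyl {σ}) = ENNReal.ofReal ((2 : ℝ)⁻¹ ^ σ.length) := by
  obtain ⟨k, hk, h⟩ := exists_forall_digits_mem_cyl_iff σ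
  have hpos : (0 : ℝ) < 2 ^ σ.length := by positivity
  have dyadic : digits ⁻¹' cyl {σ} ∩ Set.Ico 0 1 =
      Set.Ico ((k : ℝ) / 2 ^ σ.length) ((k + 1) / 2 ^ σ.length) := by
    have hk' : (k : ℝ) + 1 ≤ 2 ^ σ.length := by exact_mod_cast hk
    ext x
    rw [Set.mem_inter_iff, Set.mem_preimage, and_congr_left (h x), Int.floor_eq_iff, Set.mem_Ico,
      Set.mem_Ico, div_le_iff₀ hpos, lt_div_iff₀ hpos, Int.cast_natCast, and_iff_left_iff_imp]
    intro ⟨hl, hr⟩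
    exact ⟨nonneg_of_mul_nonneg_left (k.cast_nonneg.trans hl) hpos,
      lt_of_mul_lt_mul_right ((hr.trans_le hk').trans_eq (one_mul _).symm) hpos.le⟩
  have hσ := measurableSet_cyl_singleton σ
  rw [mu, Measure.map_apply measurable_digits hσ, Measure.restrict_apply (measurable_digits hσ),
    dyadic, Real.volume_Ico, ← sub_div, add_sub_cancel_left, one_div, inv_pow]

theorem cyl_eq_iUnion (S : Set (List Bool)) : cyl S = ⋃ σ ∈ S, cyl {σ} := by
  ext X
  simp [cyl]

theorem IsPrefixFree.pairwiseDisjoint_cyl {S : Set (List Bool)} (hS : IsPrefixFree S) :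
    S.PairwiseDisjoint fun σ => cyl {σ} := by
  intro σ hσ τ hτ hne
  refine Set.disjoint_left.2 fun X hXσ hXτ => hne ?_
  rw [mem_cyl_singleton] at hXσ hXτ
  rcases le_total σ.length τ.length with h | h
  · exact hS σ hσ τ hτ (hXσ ▸ hXτ ▸ initSeg_prefix_initSeg X h)
  · exact (hS τ hτ σ hσ (hXσ ▸ hXτ ▸ initSeg_prefix_initSeg X h)).symm

theorem IsPrefixFree.mono {S T : Set (List Bool)} (hT : IsPrefixFree T) (hST : S ⊆ T) :
    IsPrefixFree S :=
  fun σ hσ τ hτ => hT σ (hST hσ) τ (hST hτ)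

theorem IsPrefixFree.hasSum_muR_cyl {S : Set (List Bool)} (hS : IsPrefixFree S) :
    HasSum (fun σ : S => (2 : ℝ)⁻¹ ^ σ.1.length) (muR (cyl S)) := by
  have : IsFiniteMeasure mu := by
    rw [mu]
    infer_instance
  have hmu : mu (cyl S) = ∑' σ : S, mu (cyl {σ.1}) := by
    rw [cyl_eq_iUnion, measure_biUnion S.to_countable hS.pairwiseDisjoint_cyl fun σ _ =>
      measurableSet_cyl_singleton σ]
  have hsum := ENNReal.hasSum_toReal (hmu ▸ measure_ne_top mu (cyl S))
  rw [← ENNReal.tsum_toReal_eq fun _ => measure_ne_top _ _, ← hmu] at hsum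
  refine hsum.congr_fun fun σ => ?_
  rw [mu_cyl_singleton, ENNReal.toReal_ofReal (by positivity)]

/-- The length of the string with code `m`, and `0` if `m` is not the code of a string. -/
def strLength (m : ℕ) : ℕ := ((Encodable.decode m : Option (List Bool)).getD []).length

theorem computable_strLength : Computable strLength :=
  (Primrec.list_length.comp (Primrec.option_getD.comp .decode (.const []))).to_comp

theorem IsPrefixFree.hasSum_indicator_strCodes {S : Set (List Bool)} (hS : IsPrefixFree S) :
    HasSum ((strCodes S).indicator fun m => (2 : ℝ)⁻¹ ^ strLength m) (muR (cyl S)) := by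
  have encode_injective : Function.Injective fun σ : S => Encodable.encode σ.1 :=
    Encodable.encode_injective.comp Subtype.val_injective
  have hrange : Set.range (fun σ : S => Encodable.encode σ.1) = strCodes S := by
    ext m
    simp [strCodes]
  refine (encode_injective.hasSum_iff fun m hm => ?_).1 (hS.hasSum_muR_cyl.congr_fun fun σ => ?_)
  · exact Set.indicator_of_notMem (hrange ▸ hm) _
  · have mem_strCodes : Encodable.encode σ.1 ∈ strCodes S := ⟨σ, σ.2, rfl⟩
    rw [Function.comp_apply, Set.indicator_of_mem mem_strCodes, strLength, Encodable.encodek,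
      Option.getD_some]

theorem isSigma_strCodes {n : ℕ} {S : Set (List Bool)} (hS : IsSigma (n + 1) (· ∈ S)) :
    IsSigma (n + 1) (· ∈ strCodes S) := by
  have code : ComputablePred fun x : ℕ × List Bool => Encodable.encode x.2 = x.1 :=
    (Primrec.eq.comp (Primrec.encode.comp .snd) .fst).computablePred
  exact ((hS.comp .snd).and (.of_computable code)).exists_of

theorem SigmaStr.isSigma {n : ℕ} {S : Set (List Bool)} (hS : SigmaStr (n + 1) S) :
    IsSigma (n + 1) (· ∈ strCodes S) := by
  obtain ⟨c, hc⟩ := hS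
  rw [hc]
  exact isSigma_sigmaNumIdx n c

theorem IsPrefixFree.not_mlRandomIn_muR_cyl {n : ℕ} {D S : Set (List Bool)} (hD : IsPrefixFree D)
    (hDσ : IsSigma (n + 1) (· ∈ strCodes D)) (hSD : S ⊆ D)
    (hSσ : IsSigma (n + 2) (· ∈ strCodes S)) :
    ¬ MLRandomIn (iterJump (n + 1)) (muR (cyl S)) :=
  not_mlRandomIn_of_hasSum hDσ hSσ (fun _ ⟨σ, hσ, hm⟩ => ⟨σ, hSD hσ, hm⟩) computable_strLength
    hD.hasSum_indicator_strCodes.summable (hD.mono hSD).hasSum_indicator_strCodes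

/-! ### Infinitary self-delimiting machines -/

namespace InfMachine

variable {M : InfMachine} {σ τ : List Bool}

theorem isPrefixFree_DOMstar (M : InfMachine) : IsPrefixFree M.DOMstar := fun σ hσ τ hτ h => by
  by_contra hne
  exact hτ.2 σ h hne hσ.1

theorem domInf.f_eq (hσ : M.domInf σ) (h : σ <+: τ) : M.f τ = M.f σ := by
  obtain ⟨ρ, rfl⟩ := h
  funext n
  obtain ⟨a, ha⟩ := Option.ne_none_iff_exists'.1 (hσ n)
  rw [ha, M.sd σ ρ n a ha]

theorem hasBit_iff {k : ℕ} {b : Bool} :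
    M.hasBit σ k b ↔ ∃ n, ((M.f σ n).bind fun a => a[k]?) = some b := by
  simp only [hasBit, Option.bind_eq_some_iff]

theorem mem_COFout_iff :
    σ ∈ M.COFout ↔ M.domInf σ ∧ ∃ t, ∀ k, t ≤ k → M.hasBit σ k true := by
  refine and_congr_right fun _ => and_iff_right_of_imp fun ⟨t, ht⟩ k => ?_
  obtain ⟨n, a, hf, ha⟩ := ht (t + k) (t.le_add_right k)
  exact ⟨n, a, hf, by have := (List.getElem?_eq_some_iff.1 ha).1; omega⟩

theorem cyl_inter_DOMstar {S : Set (List Bool)} (hS : S ⊆ M.DOM)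
    (hprefix : ∀ σ ∈ S, ∀ τ ∈ M.DOM, τ <+: σ → τ ∈ S) : cyl (S ∩ M.DOMstar) = cyl S := by
  refine Set.Subset.antisymm (fun X ⟨n, hn⟩ => ⟨n, hn.1⟩) fun X ⟨n, hn⟩ => ?_
  have hex : ∃ j, M.domInf (initSeg X j) := ⟨n, hS hn⟩
  refine ⟨Nat.find hex, ?_, Nat.find_spec hex, fun ρ hρ hne hdom => ?_⟩
  · exact hprefix _ hn _ (Nat.find_spec hex) (initSeg_prefix_initSeg X (Nat.find_min' hex (hS hn)))
  · have hlt : ρ.length < Nat.find hex :=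
      (hρ.length_le.trans_eq (length_initSeg X _)).lt_of_ne fun h =>
        hne (hρ.eq_of_length (h.trans (length_initSeg X _).symm))
    have hseg : ρ = initSeg X ρ.length :=
      (List.prefix_of_prefix_length_le hρ (initSeg_prefix_initSeg X hlt.le)
        (length_initSeg X _).ge).eq_of_length (length_initSeg X _).symm
    exact Nat.find_min hex hlt (hseg ▸ hdom)

theorem cyl_COFout_inter_DOMstar (M : InfMachine) :
    cyl (M.COFout ∩ M.DOMstar) = cyl M.COFout := by
  refine cyl_inter_DOMstar (fun σ hσ => hσ.1) fun σ hσ τ hτ h => ?_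
  rw [mem_COFout_iff] at hσ ⊢
  refine ⟨hτ, ?_⟩
  simpa only [hasBit, domInf.f_eq hτ h] using hσ.2

theorem isSigma_not_domInf (M : InfMachine) : IsSigma 1 fun σ => ¬ M.domInf σ := by
  have halts : ComputablePred fun x : Option (List Bool) => x ≠ none :=
    (Primrec.eq.comp .id (.const none)).not.computablePred
  exact (IsSigma.comp (n := 0) halts M.computable).exists_not.of_iff fun σ => by
    simp only [domInf, not_forall]

theorem isSigma_domInf (M : InfMachine) : IsSigma 2 M.domInf :=
  M.isSigma_not_domInf.not.of_iff fun _ => not_not.symm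

theorem mem_DOMstar_iff :
    σ ∈ M.DOMstar ↔ M.domInf σ ∧ ∀ j < σ.length, ¬ M.domInf (σ.take j) := by
  refine and_congr_right fun _ => ⟨fun h j hj => h _ (σ.take_prefix j) fun heq => ?_,
    fun h τ hτ hne => ?_⟩
  · exact hj.not_ge (List.take_eq_self_iff σ |>.1 heq)
  · rw [List.prefix_iff_eq_take.1 hτ]
    exact h _ (hτ.length_le.lt_of_ne fun heq => hne (hτ.eq_of_length heq))

theorem isSigma_DOMstar (M : InfMachine) : IsSigma 2 (· ∈ M.DOMstar) :=
  (M.isSigma_domInf.and ((M.isSigma_not_domInf.succ.comp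
    (Primrec.list_take.comp .snd .fst).to_comp).forall_lt
      Primrec.list_length.to_comp)).of_iff fun _ => mem_DOMstar_iff

theorem isSigma_hasBit (M : InfMachine) (b : Bool) :
    IsSigma 1 fun x : List Bool × ℕ => M.hasBit x.1 x.2 b := by
  have hbit : Computable fun x : (List Bool × ℕ) × ℕ => (M.f x.1.1 x.2).bind fun a => a[x.1.2]? :=
    .option_bind (M.computable.comp (.comp .fst .fst) .snd)
      (Primrec.list_getElem?.to_comp.comp .snd (.comp .snd (.comp .fst .fst)))
  have eq_some : ComputablePred fun x : Option Bool => x = some b :=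
    (Primrec.eq.comp .id (.const _)).computablePred
  exact ((IsSigma.of_computable eq_some).comp hbit).exists_of.of_iff fun _ => hasBit_iff

theorem isSigma_COFout (M : InfMachine) : IsSigma 3 (· ∈ M.COFout) := by
  have le : ComputablePred fun x : (List Bool × ℕ) × ℕ => x.1.2 ≤ x.2 :=
    (Primrec.nat_le.comp (.comp .snd .fst) .snd).computablePred
  have zero_past : IsSigma 2 fun x : (List Bool × ℕ) × ℕ =>
      x.1.2 ≤ x.2 ∧ ¬ M.hasBit x.1.1 x.2 true :=
    .and (.of_computable le) ((M.isSigma_hasBit true).not.comp (.pair (.comp .fst .fst) .snd))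
  have tail : IsSigma 3 fun σ => ∃ t, ∀ k, t ≤ k → M.hasBit σ k true :=
    zero_past.exists_of.not.exists_of.of_iff fun σ => by
      simp only [not_exists, not_and, not_not]
  exact (M.isSigma_domInf.succ.and tail).of_iff fun _ => mem_COFout_iff

end InfMachine

theorem infinitary_measure_not_three_random_general (M : InfMachine) :
    (∀ n ≥ 3, ∀ S ⊆ M.DOMstar, SigmaStr n S → ¬ NRandom n (muR (cyl S))) ∧
      ¬ NRandom 3 (muR (cyl M.COFout)) := by
  have dom (n : ℕ) : IsSigma (n + 2) (· ∈ strCodes M.DOMstar) :=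
    (isSigma_strCodes M.isSigma_DOMstar).mono (Nat.le_add_left 2 n)
  constructor
  · intro n hn S hS hSσ
    obtain ⟨n, rfl⟩ := Nat.exists_eq_add_of_le' hn
    exact M.isPrefixFree_DOMstar.not_mlRandomIn_muR_cyl (dom n) hS hSσ.isSigma
  · rw [← M.cyl_COFout_inter_DOMstar]
    exact M.isPrefixFree_DOMstar.not_mlRandomIn_muR_cyl (dom 0) Set.inter_subset_right
      (isSigma_strCodes (M.isSigma_COFout.and M.isSigma_DOMstar.succ))

/-- **Limits on randomness for infinitary self-delimiting machines.**
The measure of any `Σ^0_3` subset of the domain of the prefix-free machine `M^*`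
associated with an infinitary self-delimiting machine is not 3-random.  In particular,
the probability that the output of a universal infinitary self-delimiting machine is a
stream with a tail of 1s is not 3-random. -/
theorem infinitary_measure_not_three_random :
    (∀ (M : InfMachine) (S : Set (List Bool)), S ⊆ M.DOMstar → SigmaStr 3 S →
        ¬ NRandom 3 (muR (cyl S))) ∧
    (∀ U : InfMachine, UniversalInf U → ¬ NRandom 3 (muR (cyl U.COFout))) :=
  ⟨fun M => (infinitary_measure_not_three_random_general M).1 3 le_rfl,
    fun U _ => (infinitary_measure_not_three_random_general U).2⟩

end RandProb
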